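/- (Jump relation for the free-plate shear trace of the biharmonic single layer.) Let ν ∈ ℝ, let σ : ℝ → ℝ be infinitely differentiable with σ(s+L) = σ(s) for all s, and fix t ∈ ℝ. Define the kernel K(x, y) = G^B_{n_x n_x n_x}(x,y) + (2−ν) G^B_{n_x τ_x τ_x}(x,y) + (1−ν)κ(t)·[ G^B_{τ_x τ_x}(x,y) − G^B_{n_x n_x}(x,y) ], where with r = x − y, n_x = n(t), τ_x = τ(t): G^B_{n_x n_x n_x}(x,y) = (3/(4π))(r·n_x)/‖r‖² − (1/(2π))(r·n_x)³/‖r‖⁴, G^B_{n_x τ_x τ_x}(x,y) = −(1/(2π))(r·n_x)(r·τ_x)²/‖r‖⁴ + (1/(4π))(r·n_x)/‖r‖², and G^B_{τ_x τ_x}(x,y) − G^B_{n_x n_x}(x,y) = 1/(4π) − (1/(2π))(r·n_x)²/‖r‖². Then there is h₀ > 0 such that for 0 < |h| < h₀ the point γ(t) + h·n(t) does not lie on the curve, the function s ↦ K(γ(t), γ(s))·σ(s) is bounded on [0, L] with Lebesgue integral I := ∫₀^L K(γ(t), γ(s))σ(s) ds, and lim_{h→0⁺} ∫₀^L K(γ(t)+h·n(t),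 γ(s))σ(s) ds = (1/2)σ(t) + I, while lim_{h→0⁻} ∫₀^L K(γ(t)+h·n(t), γ(s))σ(s) ds = −(1/2)σ(t) + I. -/

import Mathlib

open Real Filter Topology MeasureTheory

noncomputable section

/-- Euclidean dot product on `ℝ × ℝ`. -/
def dot2 (v w : ℝ × ℝ) : ℝ := v.1 * w.1 + v.2 * w.2

/-- Unit tangent vector `τ(s) = γ′(s)`. -/
def tang (γ : ℝ → ℝ × ℝ) (s : ℝ) : ℝ × ℝ := deriv γ s

/-- Unit normal vector `n(s) = (τ₂(s), −τ₁(s))`. -/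
def nor (γ : ℝ → ℝ × ℝ) (s : ℝ) : ℝ × ℝ := ((deriv γ s).2, -(deriv γ s).1)

/-- Signed curvature `κ(s) = −γ″(s)·n(s)`. -/
def curv (γ : ℝ → ℝ × ℝ) (s : ℝ) : ℝ := -(dot2 (deriv (deriv γ) s) (nor γ s))

/-- The free-plate kernel
`K^B_{22,free}(x,y) = G^B_{n_x n_x n_x} + (2−ν) G^B_{n_x τ_x τ_x}
  + (1−ν)κ(t)(G^B_{τ_x τ_x} − G^B_{n_x n_x})`, given by explicit formulas,
with `r = x − y`, `n_x = n(t)`, `τ_x = τ(t)`. -/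
def K22free (γ : ℝ → ℝ × ℝ) (ν : ℝ) (t : ℝ) (x y : ℝ × ℝ) : ℝ :=
  (3 / (4 * π) * dot2 (x - y) (nor γ t) / dot2 (x - y) (x - y)
      - 1 / (2 * π) * (dot2 (x - y) (nor γ t)) ^ 3 / (dot2 (x - y) (x - y)) ^ 2)
    + (2 - ν) *
      (-(1 / (2 * π)) * dot2 (x - y) (nor γ t) * (dot2 (x - y) (tang γ t)) ^ 2
          / (dot2 (x - y) (x - y)) ^ 2
        + 1 / (4 * π) * dot2 (x - y) (nor γ t) / dot2 (x - y) (x - y))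
    + (1 - ν) * curv γ t *
      (1 / (4 * π) - 1 / (2 * π) * (dot2 (x - y) (nor γ t)) ^ 2 / dot2 (x - y) (x - y))

/-!
Identify the plane with `ℂ` through the frame at `γ t`, normal `1`. In these coordinates the kernel
is `G z⁻¹` plus a bounded curvature term, where `G` is Lipschitz, real-homogeneous and zero on the
imaginary axis. Since `G` is Lipschitz, `|G z⁻¹ - G w⁻¹| ≤ K |z - w| / (|z| |w|)`; with
`z = h + ζ u` on the curve and `w = h + u i` on the tangent line, `|z - w|` is `O(u ^ 2)` and
`|z| |w|` is at least of order `u ^ 2`, so replacing the curve by its tangent costs a bounded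
remainder, and dominated convergence applies to it as `h → 0`. On the tangent line
`G (h + u i)⁻¹ = h⁻¹ G (1 + (u / h) i)⁻¹` is `sign h` times an approximate identity of mass
`∫ G (1 + v i)⁻¹ dv = 1 / 2`, which is the jump.
-/

open Complex (I re_add_im norm_real ofReal_inv ofReal_div ofReal_ne_zero real_smul re)
open scoped NNReal

lemma re_inv_one_add_mul_I (v : ℝ) : ((1 + v * I : ℂ)⁻¹).re = (1 + v ^ 2)⁻¹ := by
  simp [Complex.inv_re, Complex.normSq_apply, sq]

lemma abs_le_norm_add_mul_I (h u : ℝ) : |u| ≤ ‖(h + u * I : ℂ)‖ := by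
  simpa using Complex.abs_im_le_norm (h + u * I)

section ApproximateIdentity

variable {φ S : ℝ → ℝ} {M ℓ : ℝ}

lemma tendsto_integral_mul_comp_mul (hφ : Integrable φ) (hS : Measurable S)
    (hM : ∀ x, ‖S x‖ ≤ M) (hS₀ : ContinuousAt S 0) :
    Tendsto (fun h => ∫ v, φ v * S (h * v)) (𝓝 0) (𝓝 ((∫ v, φ v) * S 0)) := by
  have hcont : ContinuousAt (fun h => ∫ v, φ v * S (h * v)) 0 := by
    refine continuousAt_of_dominated (bound := fun v => |φ v| * M) ?_ ?_ (hφ.abs.mul_const M) ?_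
    · exact .of_forall fun h =>
        hφ.1.mul (hS.comp (measurable_const_mul h)).aestronglyMeasurable
    · refine .of_forall fun h => .of_forall fun v => ?_
      rw [norm_mul, norm_eq_abs (φ v)]
      gcongr
      exact hM _
    · refine .of_forall fun v => continuousAt_const.mul (ContinuousAt.comp ?_ (by fun_prop))
      simpa only [zero_mul] using hS₀
  simpa only [ContinuousAt, zero_mul, integral_mul_const] using hcont

lemma tendsto_integral_abs_inv_mul_comp_div (hφ : Integrable φ) (hS : Continuous S)
    (hℓ : 0 < ℓ) :
    Tendsto (fun h => ∫ u in (-ℓ)..ℓ, |h|⁻¹ * φ (u / h) * S u) (𝓝[≠] 0)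
      (𝓝 ((∫ v, φ v) * S 0)) := by
  set T : ℝ → ℝ := (Set.Ioc (-ℓ) ℓ).indicator S
  obtain ⟨M, hM⟩ := (isCompact_Icc (a := -ℓ) (b := ℓ)).exists_bound_of_continuousOn
    hS.continuousOn
  have hT_bound : ∀ x, ‖T x‖ ≤ max M 0 := fun x => by
    by_cases hx : x ∈ Set.Ioc (-ℓ) ℓ
    · simpa only [T, Set.indicator_of_mem hx] using
        (hM x (Set.Ioc_subset_Icc_self hx)).trans (le_max_left M 0)
    · simp only [T, Set.indicator_of_notMem hx, norm_zero, le_max_right]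
  have hT_eq : T =ᶠ[𝓝 0] S := by
    filter_upwards [Ioo_mem_nhds (neg_lt_zero.2 hℓ) hℓ] with x hx
    exact Set.indicator_of_mem (Set.Ioo_subset_Ioc_self hx) S
  have hlim : Tendsto (fun h => ∫ v, φ v * T (h * v)) (𝓝 0) (𝓝 ((∫ v, φ v) * S 0)) := by
    rw [← hT_eq.eq_of_nhds]
    exact tendsto_integral_mul_comp_mul hφ (hS.measurable.indicator measurableSet_Ioc)
      hT_bound (hS.continuousAt.congr hT_eq.symm)
  refine (hlim.mono_left nhdsWithin_le_nhds).congr' ?_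
  filter_upwards [self_mem_nhdsWithin] with h (hh : h ≠ 0)
  symm
  calc ∫ u in (-ℓ)..ℓ, |h|⁻¹ * φ (u / h) * S u
      = ∫ u, |h|⁻¹ * (φ (u / h) * T (h * (u / h))) := by
        rw [intervalIntegral.integral_of_le (by linarith), ← integral_indicator measurableSet_Ioc]
        refine integral_congr_ae (.of_forall fun u => ?_)
        simp only [T, mul_div_cancel₀ u hh, Set.indicator_apply, mul_assoc, mul_ite, mul_zero]
    _ = ∫ v, φ v * T (h * v) := by
        rw [integral_const_mul, Measure.integral_comp_div (fun v => φ v * T (h * v)), smul_eq_mul,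
          inv_mul_cancel_left₀ (abs_ne_zero.2 hh)]

end ApproximateIdentity

/-- The symbol `G` of a dipole-type kernel `z ↦ G z⁻¹` on `ℂ`, the model being `G = Complex.re`:
the kernel is homogeneous of degree `-1` and vanishes on the imaginary axis, which plays the role
of the tangent line. Working with `z⁻¹` turns regularity of the kernel away from the origin into
the global Lipschitz bound on `G`. -/
structure IsDipoleSymbol (G : ℂ → ℝ) (K : ℝ≥0) : Prop where
  lipschitz : LipschitzWith K G
  map_smul : ∀ (c : ℝ) (w : ℂ), G (c • w) = c * G w
  eq_zero_of_re_eq_zero : ∀ w : ℂ, w.re = 0 → G w = 0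

namespace IsDipoleSymbol

variable {G : ℂ → ℝ} {K : ℝ≥0} {S : ℝ → ℝ} {ℓ : ℝ}

lemma abs_le_mul_abs_re (hG : IsDipoleSymbol G K) (w : ℂ) : |G w| ≤ K * |w.re| := by
  have hdist := hG.lipschitz.dist_le_mul w (w.im * I)
  rw [hG.eq_zero_of_re_eq_zero (w.im * I) (by simp), dist_zero_right, dist_eq_norm] at hdist
  have hre : w - w.im * I = w.re := by
    rw [sub_eq_iff_eq_add, re_add_im]
  rwa [hre, norm_real, norm_eq_abs, norm_eq_abs] at hdist

lemma integrable_inv_one_add_mul_I (hG : IsDipoleSymbol G K) :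
    Integrable fun v : ℝ => G (1 + v * I)⁻¹ := by
  have hne : ∀ v : ℝ, (1 + v * I : ℂ) ≠ 0 := fun v h => by simpa using congrArg re h
  have hcont : Continuous fun v : ℝ => G (1 + v * I)⁻¹ :=
    hG.lipschitz.continuous.comp (Continuous.inv₀ (by fun_prop) hne)
  refine (integrable_inv_one_add_sq.const_mul (K : ℝ)).mono' hcont.aestronglyMeasurable
    (.of_forall fun v => (hG.abs_le_mul_abs_re _).trans_eq ?_)
  rw [re_inv_one_add_mul_I, abs_of_nonneg (by positivity)]

lemma apply_inv_add_mul_I (hG : IsDipoleSymbol G K) {h : ℝ} (hh : h ≠ 0) (u : ℝ) :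
    G (h + u * I)⁻¹ = h⁻¹ * G (1 + (u / h : ℝ) * I)⁻¹ := by
  rw [← hG.map_smul, real_smul, ofReal_inv, ← mul_inv, ofReal_div]
  congr 2
  field_simp [ofReal_ne_zero.2 hh]

lemma tendsto_integral_segment_right (hG : IsDipoleSymbol G K) (hS : Continuous S) (hℓ : 0 < ℓ) :
    Tendsto (fun h : ℝ => ∫ u in (-ℓ)..ℓ, G (h + u * I)⁻¹ * S u) (𝓝[>] 0)
      (𝓝 ((∫ v : ℝ, G (1 + v * I)⁻¹) * S 0)) := by
  refine ((tendsto_integral_abs_inv_mul_comp_div hG.integrable_inv_one_add_mul_I hS hℓ).mono_left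
    (nhdsGT_le_nhdsNE 0)).congr' ?_
  filter_upwards [self_mem_nhdsWithin] with h (hh : 0 < h)
  simp only [abs_of_pos hh, hG.apply_inv_add_mul_I hh.ne']

lemma tendsto_integral_segment_left (hG : IsDipoleSymbol G K) (hS : Continuous S) (hℓ : 0 < ℓ) :
    Tendsto (fun h : ℝ => ∫ u in (-ℓ)..ℓ, G (h + u * I)⁻¹ * S u) (𝓝[<] 0)
      (𝓝 (-((∫ v : ℝ, G (1 + v * I)⁻¹) * S 0))) := by
  refine ((tendsto_integral_abs_inv_mul_comp_div hG.integrable_inv_one_add_mul_I hS hℓ).mono_left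
    (nhdsLT_le_nhdsNE 0)).neg.congr' ?_
  filter_upwards [self_mem_nhdsWithin] with h (hh : h < 0)
  simp only [abs_of_neg hh, hG.apply_inv_add_mul_I hh.ne, inv_neg, neg_mul,
    intervalIntegral.integral_neg, neg_neg]

end IsDipoleSymbol

/-- A parametrised arc `ζ` in `ℂ`, over `[-ℓ, ℓ]`, that is tangent to the imaginary axis at
`ζ 0 = 0` with quadratic error and satisfies a chord-arc type bound from all points of the real
axis near the origin. This is the boundary curve near the evaluation point, in coordinates where
the normal is `1`; the constants are parameters because the estimates below are uniform in `h`. -/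
structure IsTangentArc (ζ : ℝ → ℂ) (ℓ C c h₀ : ℝ) : Prop where
  continuous : Continuous ζ
  length_pos : 0 < ℓ
  const_nonneg : 0 ≤ C
  norm_sub_le : ∀ u, |u| ≤ ℓ → ‖ζ u - u * I‖ ≤ C * u ^ 2
  chord_pos : 0 < c
  offset_pos : 0 < h₀
  mul_norm_le_norm_add : ∀ h u : ℝ, |h| < h₀ → |u| ≤ ℓ → c * ‖(h + u * I : ℂ)‖ ≤ ‖h + ζ u‖

section ChordArc

variable {ζ : ℝ → ℂ} {ℓ C m : ℝ}

lemma half_mul_norm_le_norm_add {ζu : ℂ} {u : ℝ} (hζ : ‖ζu - u * I‖ ≤ C * u ^ 2)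
    (hu : C * |u| ≤ 1 / 2) (h : ℝ) : 1 / 2 * ‖(h + u * I : ℂ)‖ ≤ ‖h + ζu‖ := by
  have hu_le : |u| ≤ ‖(h + u * I : ℂ)‖ := abs_le_norm_add_mul_I h u
  have herr : ‖ζu - u * I‖ ≤ 1 / 2 * ‖(h + u * I : ℂ)‖ :=
    calc ‖ζu - u * I‖ ≤ C * |u| * |u| := by rwa [mul_assoc, ← sq, sq_abs]
      _ ≤ 1 / 2 * ‖(h + u * I : ℂ)‖ := by gcongr
  have htri : ‖(h + u * I : ℂ)‖ ≤ ‖h + ζu‖ + ‖ζu - u * I‖ :=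
    calc ‖(h + u * I : ℂ)‖ = ‖(h + ζu) - (ζu - u * I)‖ := by congr 1; ring
      _ ≤ ‖h + ζu‖ + ‖ζu - u * I‖ := norm_sub_le _ _
  linarith

lemma div_mul_norm_le_norm_add {ζu : ℂ} {h u : ℝ} (hm : 0 < m) (hζ : m ≤ ‖ζu‖)
    (hh : |h| < m / 2) (hu : |u| ≤ ℓ) :
    m / 2 / (m / 2 + ℓ) * ‖(h + u * I : ℂ)‖ ≤ ‖h + ζu‖ := by
  have hℓ : 0 ≤ ℓ := (abs_nonneg u).trans hu
  have hflat : ‖(h + u * I : ℂ)‖ ≤ m / 2 + ℓ :=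
    calc ‖(h + u * I : ℂ)‖ ≤ |h| + |u| := by simpa using norm_add_le (h : ℂ) (u * I)
      _ ≤ m / 2 + ℓ := by gcongr
  calc m / 2 / (m / 2 + ℓ) * ‖(h + u * I : ℂ)‖ ≤ m / 2 / (m / 2 + ℓ) * (m / 2 + ℓ) := by gcongr
    _ = m / 2 := div_mul_cancel₀ _ (by positivity)
    _ ≤ ‖ζu‖ - ‖(h : ℂ)‖ := by rw [norm_real, norm_eq_abs]; linarith
    _ ≤ ‖h + ζu‖ := by simpa only [add_comm] using norm_sub_le_norm_add ζu h

lemma exists_isTangentArc (hcont : Continuous ζ) (hℓ : 0 < ℓ) (hC : 0 ≤ C)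
    (hζ : ∀ u, |u| ≤ ℓ → ‖ζ u - u * I‖ ≤ C * u ^ 2) (hne : ∀ u, |u| ≤ ℓ → u ≠ 0 → ζ u ≠ 0) :
    ∃ c h₀, IsTangentArc ζ ℓ C c h₀ := by
  set δ := 1 / (2 * (C + 1)) with hδ
  have hδ_pos : 0 < δ := by positivity
  have hCδ : C * δ ≤ 1 / 2 := by
    rw [hδ, mul_one_div, div_le_div_iff₀ (by positivity) two_pos]
    linarith
  have hcompact : IsCompact (Set.Icc (-ℓ) ℓ ∩ {u : ℝ | δ ≤ |u|}) :=
    isCompact_Icc.inter_right (isClosed_le continuous_const continuous_abs)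
  obtain ⟨m, hm, hζm⟩ := hcompact.exists_forall_le' (f := fun u => ‖ζ u‖) (a := 0)
    hcont.norm.continuousOn
    fun u hu => norm_pos_iff.2 (hne u (abs_le.2 hu.1) (abs_pos.1 (hδ_pos.trans_le hu.2)))
  refine ⟨min (1 / 2) (m / 2 / (m / 2 + ℓ)), m / 2, hcont, hℓ, hC, hζ, by positivity,
    by positivity, fun h u hh hu => ?_⟩
  rcases le_total |u| δ with hnear | hfar
  · calc _ ≤ 1 / 2 * ‖(h + u * I : ℂ)‖ := by gcongr; exact min_le_left _ _
      _ ≤ ‖h + ζ u‖ := half_mul_norm_le_norm_add (hζ u hu) (le_trans (by gcongr) hCδ) h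
  · calc _ ≤ m / 2 / (m / 2 + ℓ) * ‖(h + u * I : ℂ)‖ := by gcongr; exact min_le_right _ _
      _ ≤ ‖h + ζ u‖ := div_mul_norm_le_norm_add hm (hζm u ⟨abs_le.1 hu, hfar⟩) hh hu

end ChordArc

namespace IsTangentArc

variable {ζ : ℝ → ℂ} {ℓ C c h₀ : ℝ} {G k : ℂ → ℝ} {K : ℝ≥0} {M : ℝ} {S : ℝ → ℝ} {h u : ℝ}

lemma add_ne_zero (hζ : IsTangentArc ζ ℓ C c h₀) (hh : |h| < h₀) (hu : |u| ≤ ℓ)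
    (hne : (h + u * I : ℂ) ≠ 0) : h + ζ u ≠ 0 :=
  norm_pos_iff.1 <| (mul_pos hζ.chord_pos (norm_pos_iff.2 hne)).trans_le
    (hζ.mul_norm_le_norm_add h u hh hu)

lemma norm_inv_sub_inv_le (hζ : IsTangentArc ζ ℓ C c h₀) (hh : |h| < h₀) (hu : |u| ≤ ℓ) :
    ‖(h + ζ u)⁻¹ - (h + u * I : ℂ)⁻¹‖ ≤ C / c := by
  have hC := hζ.const_nonneg
  have hc := hζ.chord_pos
  have herr := hζ.norm_sub_le u hu
  rcases eq_or_ne u 0 with rfl | hu₀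
  · have hζ₀ : ζ 0 = 0 := by simpa using herr
    simp only [hζ₀, Complex.ofReal_zero, zero_mul, sub_self, norm_zero]
    positivity
  · have hne : (h + u * I : ℂ) ≠ 0 := fun h0 => hu₀ (by simpa using congrArg Complex.im h0)
    have hnorm : ‖(h + u * I : ℂ)‖ ≠ 0 := norm_ne_zero_iff.2 hne
    rw [← dist_eq_norm, dist_inv_inv₀ (hζ.add_ne_zero hh hu hne) hne, dist_eq_norm,
      add_sub_add_left_eq_sub]
    calc ‖ζ u - u * I‖ / (‖h + ζ u‖ * ‖(h + u * I : ℂ)‖)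
        ≤ C * ‖(h + u * I : ℂ)‖ ^ 2 / (c * ‖(h + u * I : ℂ)‖ * ‖(h + u * I : ℂ)‖) := by
          gcongr
          · refine herr.trans ?_
            rw [← sq_abs u]
            gcongr
            exact abs_le_norm_add_mul_I h u
          · exact hζ.mul_norm_le_norm_add h u hh hu
      _ = C / c := by field_simp [hnorm]

lemma abs_kernel_sub_le (hζ : IsTangentArc ζ ℓ C c h₀) (hG : IsDipoleSymbol G K)
    (hkG : ∀ z, |k z - G z⁻¹| ≤ M) (hh : |h| < h₀) (hu : |u| ≤ ℓ) :
    |k (h + ζ u) - G (h + u * I)⁻¹| ≤ M + K * (C / c) :=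
  calc |k (h + ζ u) - G (h + u * I)⁻¹|
      ≤ |k (h + ζ u) - G (h + ζ u)⁻¹| + |G (h + ζ u)⁻¹ - G (h + u * I)⁻¹| := abs_sub_le _ _ _
    _ ≤ M + K * ‖(h + ζ u)⁻¹ - (h + u * I : ℂ)⁻¹‖ := by
        gcongr
        · exact hkG _
        · simpa only [dist_eq_norm, norm_eq_abs] using hG.lipschitz.dist_le_mul _ _
    _ ≤ M + K * (C / c) := by
        gcongr
        exact hζ.norm_inv_sub_inv_le hh hu

lemma abs_kernel_le (hζ : IsTangentArc ζ ℓ C c h₀) (hG : IsDipoleSymbol G K)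
    (hkG : ∀ z, |k z - G z⁻¹| ≤ M) (hu : |u| ≤ ℓ) : |k (ζ u)| ≤ M + K * (C / c) := by
  have hbound := hζ.abs_kernel_sub_le hG hkG (abs_zero.trans_lt hζ.offset_pos) hu
  rwa [Complex.ofReal_zero, zero_add, zero_add, hG.eq_zero_of_re_eq_zero _ (by simp),
    sub_zero] at hbound

lemma aestronglyMeasurable_kernel_sub (hζ : IsTangentArc ζ ℓ C c h₀)
    (hG : IsDipoleSymbol G K) (hk : ContinuousOn k {0}ᶜ) (hS : Continuous S) (h : ℝ)
    (μ : Measure ℝ) :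
    AEStronglyMeasurable (fun u : ℝ => (k (h + ζ u) - G (h + u * I)⁻¹) * S u) μ := by
  have hk_meas : Measurable k := measurable_of_continuousOn_compl_singleton 0 hk
  have hG_meas : Measurable G := hG.lipschitz.continuous.measurable
  have hζ_meas : Measurable ζ := hζ.continuous.measurable
  have hS_meas : Measurable S := hS.measurable
  exact Measurable.aestronglyMeasurable (by fun_prop)

lemma exists_abs_kernel_sub_mul_le (hζ : IsTangentArc ζ ℓ C c h₀) (hG : IsDipoleSymbol G K)
    (hkG : ∀ z, |k z - G z⁻¹| ≤ M) (hS : Continuous S) :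
    ∃ B, ∀ h u : ℝ, |h| < h₀ → u ∈ Set.uIoc (-ℓ) ℓ →
      ‖(k (h + ζ u) - G (h + u * I)⁻¹) * S u‖ ≤ B := by
  obtain ⟨D, hD⟩ := (isCompact_Icc (a := -ℓ) (b := ℓ)).exists_bound_of_continuousOn
    hS.continuousOn
  refine ⟨(M + K * (C / c)) * D, fun h u hh hu => ?_⟩
  rw [Set.uIoc_of_le (by linarith [hζ.length_pos])] at hu
  rw [norm_mul]
  have hker := hζ.abs_kernel_sub_le hG hkG hh (abs_le.2 (Set.Ioc_subset_Icc_self hu))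
  exact mul_le_mul hker (hD u (Set.Ioc_subset_Icc_self hu)) (norm_nonneg _)
    ((abs_nonneg _).trans hker)

lemma tendsto_integral_kernel_sub (hζ : IsTangentArc ζ ℓ C c h₀) (hG : IsDipoleSymbol G K)
    (hk : ContinuousOn k {0}ᶜ) (hkG : ∀ z, |k z - G z⁻¹| ≤ M) (hS : Continuous S) :
    Tendsto (fun h : ℝ => ∫ u in (-ℓ)..ℓ, (k (h + ζ u) - G (h + u * I)⁻¹) * S u) (𝓝 0)
      (𝓝 (∫ u in (-ℓ)..ℓ, k (ζ u) * S u)) := by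
  obtain ⟨B, hB⟩ := hζ.exists_abs_kernel_sub_mul_le hG hkG hS
  have hcont : ContinuousAt
      (fun h : ℝ => ∫ u in (-ℓ)..ℓ, (k (h + ζ u) - G (h + u * I)⁻¹) * S u) 0 := by
    refine intervalIntegral.continuousAt_of_dominated_interval (bound := fun _ => B)
      (.of_forall fun h => hζ.aestronglyMeasurable_kernel_sub hG hk hS h _) ?_
      intervalIntegrable_const ?_
    · filter_upwards [Metric.ball_mem_nhds 0 hζ.offset_pos] with h hh
      exact .of_forall fun u => hB h u (by simpa using hh)
    · filter_upwards [Measure.ae_ne volume 0] with u hu₀ hu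
      rw [Set.uIoc_of_le (by linarith [hζ.length_pos])] at hu
      have hflat : ((0 : ℝ) + u * I : ℂ) ≠ 0 := by simpa using hu₀
      have hcurved : ((0 : ℝ) + ζ u : ℂ) ≠ 0 := hζ.add_ne_zero (abs_zero.trans_lt hζ.offset_pos)
        (abs_le.2 (Set.Ioc_subset_Icc_self hu)) hflat
      have hadd : ∀ w : ℂ, ContinuousAt (fun h : ℝ => h + w) 0 := fun w => by fun_prop
      refine .mul (.sub ?_ ?_) continuousAt_const
      · exact ContinuousAt.comp (f := fun h : ℝ => (h : ℂ) + ζ u)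
          (hk.continuousAt (isOpen_compl_singleton.mem_nhds hcurved)) (hadd _)
      · exact hG.lipschitz.continuous.continuousAt.comp ((hadd _).inv₀ hflat)
  have hflat_zero : ∀ u : ℝ, G (u * I)⁻¹ = 0 := fun u =>
    hG.eq_zero_of_re_eq_zero _ (by simp)
  simpa only [ContinuousAt, hflat_zero, sub_zero, Complex.ofReal_zero, zero_add] using hcont

lemma integral_kernel_eq_add (hζ : IsTangentArc ζ ℓ C c h₀) (hG : IsDipoleSymbol G K)
    (hk : ContinuousOn k {0}ᶜ) (hkG : ∀ z, |k z - G z⁻¹| ≤ M) (hS : Continuous S)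
    (hh : |h| < h₀) (hh₀ : h ≠ 0) :
    ∫ u in (-ℓ)..ℓ, k (h + ζ u) * S u =
      (∫ u in (-ℓ)..ℓ, G (h + u * I)⁻¹ * S u) +
        ∫ u in (-ℓ)..ℓ, (k (h + ζ u) - G (h + u * I)⁻¹) * S u := by
  have hne : ∀ u : ℝ, (h + u * I : ℂ) ≠ 0 := fun u h0 => hh₀ (by simpa using congrArg re h0)
  have hflat : Continuous fun u : ℝ => G (h + u * I)⁻¹ * S u :=
    (hG.lipschitz.continuous.comp (Continuous.inv₀ (by fun_prop) hne)).mul hS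
  obtain ⟨B, hB⟩ := hζ.exists_abs_kernel_sub_mul_le hG hkG hS
  have hrem : IntervalIntegrable (fun u : ℝ => (k (h + ζ u) - G (h + u * I)⁻¹) * S u)
      volume (-ℓ) ℓ :=
    (intervalIntegrable_const (c := B)).mono_fun'
      (hζ.aestronglyMeasurable_kernel_sub hG hk hS h _)
      ((ae_restrict_iff' measurableSet_uIoc).2 (.of_forall fun u => hB h u hh))
  rw [← intervalIntegral.integral_add (hflat.intervalIntegrable _ _) hrem]
  simp only [← add_mul, add_sub_cancel]

lemma eventually_abs_lt_and_ne (hζ : IsTangentArc ζ ℓ C c h₀) :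
    ∀ᶠ h : ℝ in 𝓝[≠] 0, |h| < h₀ ∧ h ≠ 0 := by
  filter_upwards [nhdsWithin_le_nhds (Metric.ball_mem_nhds 0 hζ.offset_pos),
    self_mem_nhdsWithin] with h hh hh₀
  exact ⟨by simpa using hh, hh₀⟩

theorem tendsto_integral_kernel_right (hζ : IsTangentArc ζ ℓ C c h₀)
    (hG : IsDipoleSymbol G K) (hk : ContinuousOn k {0}ᶜ) (hkG : ∀ z, |k z - G z⁻¹| ≤ M)
    (hS : Continuous S) :
    Tendsto (fun h : ℝ => ∫ u in (-ℓ)..ℓ, k (h + ζ u) * S u) (𝓝[>] 0)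
      (𝓝 ((∫ v : ℝ, G (1 + v * I)⁻¹) * S 0 + ∫ u in (-ℓ)..ℓ, k (ζ u) * S u)) := by
  refine ((hG.tendsto_integral_segment_right hS hζ.length_pos).add
    ((hζ.tendsto_integral_kernel_sub hG hk hkG hS).mono_left nhdsWithin_le_nhds)).congr' ?_
  filter_upwards [nhdsGT_le_nhdsNE 0 hζ.eventually_abs_lt_and_ne] with h hh
  exact (hζ.integral_kernel_eq_add hG hk hkG hS hh.1 hh.2).symm

theorem tendsto_integral_kernel_left (hζ : IsTangentArc ζ ℓ C c h₀)
    (hG : IsDipoleSymbol G K) (hk : ContinuousOn k {0}ᶜ) (hkG : ∀ z, |k z - G z⁻¹| ≤ M)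
    (hS : Continuous S) :
    Tendsto (fun h : ℝ => ∫ u in (-ℓ)..ℓ, k (h + ζ u) * S u) (𝓝[<] 0)
      (𝓝 (-((∫ v : ℝ, G (1 + v * I)⁻¹) * S 0) + ∫ u in (-ℓ)..ℓ, k (ζ u) * S u)) := by
  refine ((hG.tendsto_integral_segment_left hS hζ.length_pos).add
    ((hζ.tendsto_integral_kernel_sub hG hk hkG hS).mono_left nhdsWithin_le_nhds)).congr' ?_
  filter_upwards [nhdsLT_le_nhdsNE 0 hζ.eventually_abs_lt_and_ne] with h hh
  exact (hζ.integral_kernel_eq_add hG hk hkG hS hh.1 hh.2).symm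

end IsTangentArc

section PlateKernel

lemma lipschitzWith_re_pow_three_div_norm_sq :
    LipschitzWith 5 fun w : ℂ => w.re ^ 3 / ‖w‖ ^ 2 := by
  refine .of_dist_le_mul fun z w => ?_
  set p := z.re / ‖z‖
  set q := w.re / ‖w‖
  have hp : |p| ≤ 1 := Complex.abs_re_div_norm_le_one z
  have hq : |q| ≤ 1 := Complex.abs_re_div_norm_le_one w
  have hre : ∀ w : ℂ, w.re / ‖w‖ * ‖w‖ = w.re := fun w =>
    div_mul_cancel_of_imp fun hw => by rw [norm_eq_zero.1 hw, Complex.zero_re]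
  have hcube : ∀ w : ℂ, w.re ^ 3 / ‖w‖ ^ 2 = w.re * (w.re / ‖w‖) ^ 2 := fun w => by ring
  have hre_sub : |z.re - w.re| ≤ ‖z - w‖ := Complex.abs_re_le_norm (z - w)
  have hnorm_sub : |‖z‖ - ‖w‖| ≤ ‖z - w‖ := abs_norm_sub_norm_le z w
  have hangle : |‖w‖ * (p - q)| ≤ 2 * ‖z - w‖ :=
    calc |‖w‖ * (p - q)| = |(z.re - w.re) - p * (‖z‖ - ‖w‖)| := by
          congr 1
          linear_combination hre z - hre w
      _ ≤ |z.re - w.re| + |p| * |‖z‖ - ‖w‖| := by rw [← abs_mul]; exact abs_sub _ _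
      _ ≤ ‖z - w‖ + 1 * ‖z - w‖ := by gcongr
      _ = 2 * ‖z - w‖ := by ring
  rw [dist_eq_norm, norm_eq_abs, dist_eq_norm, hcube, hcube]
  calc |z.re * p ^ 2 - w.re * q ^ 2|
      = |(z.re - w.re) * p ^ 2 + ‖w‖ * (p - q) * (q * (p + q))| := by
        congr 1
        linear_combination (q ^ 2 - p ^ 2) * hre w
    _ ≤ |z.re - w.re| * |p| ^ 2 + |‖w‖ * (p - q)| * (|q| * |p + q|) := by
        rw [← abs_pow, ← abs_mul, ← abs_mul q, ← abs_mul (_ * _)]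
        exact abs_add_le _ _
    _ ≤ ‖z - w‖ * 1 ^ 2 + 2 * ‖z - w‖ * (1 * (1 + 1)) := by
        gcongr
        exact (abs_add_le p q).trans (add_le_add hp hq)
    _ = (5 : ℝ≥0) * ‖z - w‖ := by push_cast; ring

/-- The symbol of the singular part of the free-plate kernel: in coordinates where the normal is
`1`, eliminating `(r·τ)²` by Pythagoras turns `G^B_{nnn} + (2 - ν) G^B_{nττ}` into
`plateSymbol ν z⁻¹`. -/
def plateSymbol (ν : ℝ) (w : ℂ) : ℝ :=
  (1 + ν) / (4 * π) * w.re + (1 - ν) / (2 * π) * (w.re ^ 3 / ‖w‖ ^ 2)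

/-- The free-plate kernel as a function of `z = r·n - i r·τ`; here `κ` is the curvature. -/
def plateKernel (ν κ : ℝ) (z : ℂ) : ℝ :=
  plateSymbol ν z⁻¹ + (1 - ν) * κ * (1 / (4 * π) - 1 / (2 * π) * (z.re ^ 2 / ‖z‖ ^ 2))

lemma exists_isDipoleSymbol_plateSymbol (ν : ℝ) : ∃ K, IsDipoleSymbol (plateSymbol ν) K := by
  have hre : LipschitzWith 1 re := .of_dist_le_mul fun z w => by
    simpa only [NNReal.coe_one, one_mul, dist_eq_norm, norm_eq_abs, Complex.sub_re] using
      Complex.abs_re_le_norm (z - w)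
  refine ⟨_, ((lipschitzWith_smul ((1 + ν) / (4 * π))).comp hre).add
    ((lipschitzWith_smul ((1 - ν) / (2 * π))).comp lipschitzWith_re_pow_three_div_norm_sq),
    fun c w => ?_, fun w hw => ?_⟩
  · have hcube : (c * w.re) ^ 3 / (|c| * ‖w‖) ^ 2 = c * (w.re ^ 3 / ‖w‖ ^ 2) := by
      rcases eq_or_ne c 0 with rfl | hc
      · simp
      · rw [mul_pow, mul_pow, sq_abs, mul_div_mul_comm, pow_succ' c 2,
          mul_div_cancel_right₀ c (pow_ne_zero 2 hc)]
    simp only [plateSymbol, Complex.smul_re, smul_eq_mul, norm_smul, norm_eq_abs, hcube]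
    ring
  · simp [plateSymbol, hw]

lemma plateSymbol_inv (ν : ℝ) (z : ℂ) :
    plateSymbol ν z⁻¹ = (1 + ν) / (4 * π) * (z.re / ‖z‖ ^ 2)
      + (1 - ν) / (2 * π) * (z.re ^ 3 / (‖z‖ ^ 2) ^ 2) := by
  rcases eq_or_ne z 0 with rfl | hz
  · simp [plateSymbol]
  · have hnorm : ‖z‖ ≠ 0 := norm_ne_zero_iff.2 hz
    rw [plateSymbol, Complex.inv_re, Complex.normSq_eq_norm_sq, norm_inv]
    field_simp

lemma sq_re_div_sq_norm_le_one (z : ℂ) : z.re ^ 2 / ‖z‖ ^ 2 ≤ 1 := by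
  rw [← div_pow, ← sq_abs]
  exact pow_le_one₀ (abs_nonneg _) (Complex.abs_re_div_norm_le_one z)

lemma abs_plateKernel_sub_le (ν κ : ℝ) (z : ℂ) :
    |plateKernel ν κ z - plateSymbol ν z⁻¹| ≤ |(1 - ν) * κ| * (1 / (4 * π) + 1 / (2 * π)) := by
  rw [plateKernel, add_sub_cancel_left, abs_mul]
  gcongr
  calc |1 / (4 * π) - 1 / (2 * π) * (z.re ^ 2 / ‖z‖ ^ 2)|
      ≤ |1 / (4 * π)| + |1 / (2 * π) * (z.re ^ 2 / ‖z‖ ^ 2)| := abs_sub _ _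
    _ = 1 / (4 * π) + 1 / (2 * π) * (z.re ^ 2 / ‖z‖ ^ 2) := by
        rw [abs_of_pos (by positivity), abs_of_nonneg (by positivity)]
    _ ≤ 1 / (4 * π) + 1 / (2 * π) := by
        gcongr
        exact mul_le_of_le_one_right (by positivity) (sq_re_div_sq_norm_le_one z)

lemma continuousOn_plateKernel (ν κ : ℝ) : ContinuousOn (plateKernel ν κ) {0}ᶜ := by
  obtain ⟨K, hK⟩ := exists_isDipoleSymbol_plateSymbol ν
  have hsymbol : ContinuousOn (fun z => plateSymbol ν z⁻¹) {0}ᶜ :=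
    hK.lipschitz.continuous.comp_continuousOn continuousOn_inv₀
  have hratio : ContinuousOn (fun z : ℂ => z.re ^ 2 / ‖z‖ ^ 2) {0}ᶜ :=
    (by fun_prop : Continuous fun z : ℂ => z.re ^ 2).continuousOn.div (by fun_prop)
      fun z hz => pow_ne_zero 2 (norm_ne_zero_iff.2 hz)
  exact hsymbol.add (continuousOn_const.mul (continuousOn_const.sub
    (continuousOn_const.mul hratio)))

lemma tendsto_div_one_add_sq_cobounded :
    Tendsto (fun x : ℝ => x / (1 + x ^ 2)) (Bornology.cobounded ℝ) (𝓝 0) := by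
  refine squeeze_zero_norm (fun x => ?_) (tendsto_norm_zero.comp tendsto_inv₀_cobounded)
  rcases eq_or_ne x 0 with rfl | hx
  · simp
  · rw [Function.comp_apply, norm_div, norm_inv, norm_eq_abs, norm_eq_abs,
      abs_of_pos (by positivity : 0 < 1 + x ^ 2), div_le_iff₀ (by positivity), ← sq_abs]
    field_simp
    linarith

lemma integrable_inv_one_add_sq_sq : Integrable fun x : ℝ => ((1 + x ^ 2)⁻¹) ^ 2 := by
  refine integrable_inv_one_add_sq.mono' (by fun_prop) (.of_forall fun x => ?_)
  rw [norm_of_nonneg (by positivity)]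
  exact pow_le_of_le_one (by positivity) (inv_le_one_of_one_le₀ (by nlinarith)) two_ne_zero

lemma integral_inv_one_add_sq_sq : ∫ x : ℝ, ((1 + x ^ 2)⁻¹) ^ 2 = π / 2 := by
  have hderiv : ∀ x : ℝ, HasDerivAt (fun x => 1 / 2 * (arctan x + x / (1 + x ^ 2)))
      (((1 + x ^ 2)⁻¹) ^ 2) x := fun x => by
    have hne : 1 + x ^ 2 ≠ 0 := by positivity
    refine (((hasDerivAt_arctan x).add ((hasDerivAt_id x).div
      ((hasDerivAt_pow 2 x).const_add 1) hne)).const_mul (1 / 2)).congr_deriv ?_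
    simp only [id]
    field_simp
    ring
  have hbot_le : atBot ≤ Bornology.cobounded ℝ :=
    IsOrderBornology.cobounded_eq (α := ℝ) ▸ le_sup_left
  have htop_le : atTop ≤ Bornology.cobounded ℝ :=
    IsOrderBornology.cobounded_eq (α := ℝ) ▸ le_sup_right
  have hbot := ((tendsto_nhds_of_tendsto_nhdsWithin tendsto_arctan_atBot).add
    (tendsto_div_one_add_sq_cobounded.mono_left hbot_le)).const_mul (1 / 2)
  have htop := ((tendsto_nhds_of_tendsto_nhdsWithin tendsto_arctan_atTop).add
    (tendsto_div_one_add_sq_cobounded.mono_left htop_le)).const_mul (1 / 2)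
  rw [integral_of_hasDerivAt_of_tendsto hderiv integrable_inv_one_add_sq_sq hbot htop]
  ring

lemma integral_plateSymbol (ν : ℝ) : ∫ v : ℝ, plateSymbol ν (1 + v * I)⁻¹ = 1 / 2 := by
  have hsymbol : ∀ v : ℝ, plateSymbol ν (1 + v * I)⁻¹ =
      (1 + ν) / (4 * π) * (1 + v ^ 2)⁻¹ + (1 - ν) / (2 * π) * ((1 + v ^ 2)⁻¹) ^ 2 := fun v => by
    have hnorm : ‖(1 + v * I : ℂ)‖ ^ 2 = 1 + v ^ 2 := by
      rw [← Complex.normSq_eq_norm_sq]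
      simp [Complex.normSq_apply, sq]
    have hre : (1 + v * I : ℂ).re = 1 := by simp
    rw [plateSymbol_inv, hnorm, hre, one_pow, one_div, one_div, inv_pow]
  simp only [hsymbol]
  rw [integral_add (integrable_inv_one_add_sq.const_mul _)
    (integrable_inv_one_add_sq_sq.const_mul _), integral_const_mul, integral_const_mul,
    integral_univ_inv_one_add_sq, integral_inv_one_add_sq_sq]
  field_simp
  ring

end PlateKernel

section PeriodicFunction

variable {α : Type*} {f : ℝ → α} {L : ℝ}

lemma apply_add_ne_of_periodic_of_injOn (hf : Function.Periodic f L) (hL : 0 < L)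
    (hinj : Set.InjOn f (Set.Ico 0 L)) {x u : ℝ} (hu : |u| < L) (hu₀ : u ≠ 0) :
    f (x + u) ≠ f x := by
  intro heq
  have hred : ∀ y, f (toIcoMod hL 0 y) = f y := fun y => hf.sub_zsmul_eq (toIcoDiv hL 0 y)
  have hmem : ∀ y, toIcoMod hL 0 y ∈ Set.Ico 0 L := fun y => by
    simpa only [zero_add] using toIcoMod_mem_Ico hL 0 y
  have hmod : toIcoMod hL 0 (x + u) = toIcoMod hL 0 x :=
    hinj (hmem _) (hmem _) ((hred _).trans (heq.trans (hred _).symm))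
  have hu_eq : u = ((toIcoDiv hL 0 (x + u) - toIcoDiv hL 0 x : ℤ) : ℝ) * L := by
    have hsub := toIcoMod_add_toIcoDiv_zsmul hL 0 (x + u)
    rw [hmod] at hsub
    have hsub' := toIcoMod_add_toIcoDiv_zsmul hL 0 x
    simp only [zsmul_eq_mul] at hsub hsub'
    push_cast
    linarith
  rw [hu_eq, abs_mul, abs_of_pos hL, mul_lt_iff_lt_one_left hL, ← Int.cast_abs] at hu
  have hdiv : toIcoDiv hL 0 (x + u) - toIcoDiv hL 0 x = 0 :=
    Int.abs_lt_one_iff.1 (by exact_mod_cast hu)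
  rw [hdiv, Int.cast_zero, zero_mul] at hu_eq
  exact hu₀ hu_eq

lemma exists_abs_le_apply_eq_of_periodic (hf : Function.Periodic f L) (hL : 0 < L) (t s : ℝ) :
    ∃ u, |u| ≤ L / 2 ∧ f s = f (t + u) := by
  obtain ⟨y, hy, hfy⟩ := hf.exists_mem_Ico hL s (t - L / 2)
  exact ⟨y - t, abs_le.2 ⟨by linarith [hy.1], by linarith [hy.2]⟩, by rwa [add_sub_cancel]⟩

lemma integral_eq_integral_centered_of_periodic {f : ℝ → ℝ} (hf : Function.Periodic f L) (t : ℝ) :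
    ∫ s in (0 : ℝ)..L, f s = ∫ u in (-(L / 2))..(L / 2), f (t + u) := by
  have hshift := hf.intervalIntegral_add_eq 0 (t - L / 2)
  rw [zero_add] at hshift
  rw [intervalIntegral.integral_comp_add_left f t, hshift]
  congr 1
  ring

end PeriodicFunction

section Taylor

variable {E : Type*} [NormedAddCommGroup E] [NormedSpace ℝ E] {f : ℝ → E}

lemma exists_norm_sub_sub_smul_deriv_le (hf : ContDiff ℝ 2 f) (t ℓ : ℝ) :
    ∃ C ≥ 0, ∀ u, |u| ≤ ℓ → ‖f (t + u) - f t - u • deriv f t‖ ≤ C * u ^ 2 := by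
  have hdiff : Differentiable ℝ f := hf.differentiable two_ne_zero
  obtain ⟨-, -, hderiv⟩ := contDiff_succ_iff_deriv.1 (show ContDiff ℝ (1 + 1) f from hf)
  obtain ⟨K, hK⟩ := hderiv.locallyLipschitz.locallyLipschitzOn
    |>.exists_lipschitzOnWith_of_compact (isCompact_closedBall t ℓ)
  refine ⟨K, K.coe_nonneg, fun u hu => ?_⟩
  have hmem : ∀ x ∈ Metric.closedBall t |u|, x ∈ Metric.closedBall t ℓ := fun x hx =>
    Metric.closedBall_subset_closedBall hu hx
  have hbound : ∀ x ∈ Metric.closedBall t |u|, ‖deriv f x - deriv f t‖ ≤ K * |u| := fun x hx =>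
    calc ‖deriv f x - deriv f t‖ ≤ K * dist x t := by
          rw [← dist_eq_norm]
          exact hK.dist_le_mul x (hmem x hx) t (hmem t (Metric.mem_closedBall_self (abs_nonneg u)))
      _ ≤ K * |u| := by gcongr; exact hx
  have hderiv_sub : ∀ x ∈ Metric.closedBall t |u|, HasDerivWithinAt
      (fun x => f x - (x - t) • deriv f t) (deriv f x - deriv f t) (Metric.closedBall t |u|) x :=
    fun x _ => by
      simpa only [one_smul] using ((hdiff x).hasDerivAt.fun_sub
        (((hasDerivAt_id' x).sub_const t).smul_const (deriv f t))).hasDerivWithinAt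
  have hmvt := (convex_closedBall t |u|).norm_image_sub_le_of_norm_hasDerivWithin_le hderiv_sub
    hbound (Metric.mem_closedBall_self (abs_nonneg u))
    (show t + u ∈ Metric.closedBall t |u| by simp)
  calc ‖f (t + u) - f t - u • deriv f t‖ ≤ K * |u| * |u| := by
        simpa [sub_right_comm] using hmvt
    _ = K * u ^ 2 := by rw [mul_assoc, ← sq, sq_abs]

end Taylor

section BoundaryFrame

variable {γ : ℝ → ℝ × ℝ} {t L : ℝ}

/-- The coordinate `r·n - i r·τ` of a plane vector `r` in the frame of the curve at `t`. The sign
is chosen so that `γ t + h n - γ (t + u)` has coordinate `h + u i` to first order. -/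
def frameCoord (γ : ℝ → ℝ × ℝ) (t : ℝ) : ℝ × ℝ →L[ℝ] ℂ :=
  LinearMap.toContinuousLinearMap
    { toFun := fun r => ⟨dot2 r (nor γ t), -dot2 r (tang γ t)⟩
      map_add' := fun r s => by
        apply Complex.ext <;> simp only [dot2, Prod.fst_add, Prod.snd_add, Complex.add_re,
          Complex.add_im] <;> ring
      map_smul' := fun c r => by
        apply Complex.ext <;> simp only [dot2, Prod.smul_fst, Prod.smul_snd, smul_eq_mul,
          Complex.smul_re, Complex.smul_im, RingHom.id_apply] <;> ring }

/-- The chord from `γ (t + u)` to `γ t`, in the frame of the curve at `t`. -/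
def chordCoord (γ : ℝ → ℝ × ℝ) (t u : ℝ) : ℂ := frameCoord γ t (γ t - γ (t + u))

lemma frameCoord_re (γ : ℝ → ℝ × ℝ) (t : ℝ) (r : ℝ × ℝ) :
    (frameCoord γ t r).re = dot2 r (nor γ t) := rfl

lemma frameCoord_im (γ : ℝ → ℝ × ℝ) (t : ℝ) (r : ℝ × ℝ) :
    (frameCoord γ t r).im = -dot2 r (tang γ t) := rfl

lemma sq_add_sq_frame (ht : dot2 (deriv γ t) (deriv γ t) = 1) (r : ℝ × ℝ) :
    dot2 r (nor γ t) ^ 2 + dot2 r (tang γ t) ^ 2 = dot2 r r := by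
  simp only [dot2, nor, tang] at ht ⊢
  linear_combination (r.1 ^ 2 + r.2 ^ 2) * ht

lemma sq_norm_frameCoord (ht : dot2 (deriv γ t) (deriv γ t) = 1) (r : ℝ × ℝ) :
    ‖frameCoord γ t r‖ ^ 2 = dot2 r r := by
  rw [← Complex.normSq_eq_norm_sq, Complex.normSq_apply, frameCoord_re, frameCoord_im,
    ← sq_add_sq_frame ht]
  ring

lemma frameCoord_injective (ht : dot2 (deriv γ t) (deriv γ t) = 1) :
    Function.Injective (frameCoord γ t) := by
  refine (injective_iff_map_eq_zero _).2 fun r hr => ?_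
  have hsum := sq_norm_frameCoord ht r
  rw [hr, norm_zero, zero_pow two_ne_zero, dot2] at hsum
  obtain ⟨h₁, h₂⟩ := mul_self_add_mul_self_eq_zero.1 hsum.symm
  exact Prod.ext h₁ h₂

lemma frameCoord_nor (ht : dot2 (deriv γ t) (deriv γ t) = 1) : frameCoord γ t (nor γ t) = 1 := by
  apply Complex.ext
  · rw [frameCoord_re, Complex.one_re, ← ht]
    simp only [dot2, nor]
    ring
  · rw [frameCoord_im, Complex.one_im]
    simp only [dot2, nor, tang]
    ring

lemma frameCoord_deriv (ht : dot2 (deriv γ t) (deriv γ t) = 1) :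
    frameCoord γ t (deriv γ t) = -I := by
  apply Complex.ext
  · rw [frameCoord_re, Complex.neg_re, Complex.I_re, neg_zero]
    simp only [dot2, nor]
    ring
  · rw [frameCoord_im, Complex.neg_im, Complex.I_im, ← ht, tang]

lemma K22free_eq_plateKernel (ht : dot2 (deriv γ t) (deriv γ t) = 1) (ν : ℝ) (x y : ℝ × ℝ) :
    K22free γ ν t x y = plateKernel ν (curv γ t) (frameCoord γ t (x - y)) := by
  have htang : dot2 (x - y) (tang γ t) ^ 2 =
      dot2 (x - y) (x - y) - dot2 (x - y) (nor γ t) ^ 2 :=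
    eq_sub_of_add_eq' (sq_add_sq_frame ht _)
  rw [K22free, plateKernel, plateSymbol_inv, sq_norm_frameCoord ht, frameCoord_re, htang]
  rcases eq_or_ne (dot2 (x - y) (x - y)) 0 with hzero | hne
  · simp [hzero]
  · field_simp
    ring

lemma frameCoord_add_smul_nor_sub (ht : dot2 (deriv γ t) (deriv γ t) = 1) (h u : ℝ) :
    frameCoord γ t (γ t + h • nor γ t - γ (t + u)) = h + chordCoord γ t u := by
  rw [add_sub_right_comm, map_add, map_smul, frameCoord_nor ht, add_comm, chordCoord, real_smul,
    mul_one]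

lemma exists_norm_chordCoord_sub_le (hγ : ContDiff ℝ 2 γ)
    (ht : dot2 (deriv γ t) (deriv γ t) = 1) (ℓ : ℝ) :
    ∃ C ≥ 0, ∀ u, |u| ≤ ℓ → ‖chordCoord γ t u - u * I‖ ≤ C * u ^ 2 := by
  have hderiv : deriv (fun s => frameCoord γ t (γ s)) t = -I := by
    rw [← frameCoord_deriv ht]
    exact ((frameCoord γ t).hasFDerivAt.comp_hasDerivAt t
      (hγ.differentiable two_ne_zero t).hasDerivAt).deriv
  obtain ⟨C, hC, hbound⟩ :=
    exists_norm_sub_sub_smul_deriv_le ((frameCoord γ t).contDiff.comp hγ) t ℓ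
  refine ⟨C, hC, fun u hu => (congrArg norm ?_).trans_le ((norm_neg _).trans_le (hbound u hu))⟩
  simp only [Function.comp_def, hderiv, chordCoord, map_sub, real_smul]
  ring

lemma exists_isTangentArc_chordCoord (hL : 0 < L) (hγ : ContDiff ℝ 2 γ)
    (hper : Function.Periodic γ L) (hinj : Set.InjOn γ (Set.Ico 0 L))
    (ht : dot2 (deriv γ t) (deriv γ t) = 1) :
    ∃ C c h₀, IsTangentArc (chordCoord γ t) (L / 2) C c h₀ := by
  obtain ⟨C, hC, hbound⟩ := exists_norm_chordCoord_sub_le hγ ht (L / 2)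
  have hcont : Continuous (chordCoord γ t) :=
    (frameCoord γ t).continuous.comp
      (continuous_const.sub (hγ.continuous.comp (continuous_const_add t)))
  refine ⟨C, exists_isTangentArc hcont (half_pos hL) hC hbound fun u hu hu₀ => ?_⟩
  rw [chordCoord, map_ne_zero_iff _ (frameCoord_injective ht), sub_ne_zero]
  exact (apply_add_ne_of_periodic_of_injOn hper hL hinj (by linarith) hu₀).symm

end BoundaryFrame

section JumpRelation

variable {γ : ℝ → ℝ × ℝ} {σ : ℝ → ℝ} {L C c h₀ t : ℝ}

lemma add_smul_nor_ne_of_isTangentArc (hL : 0 < L) (hper : Function.Periodic γ L)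
    (ht : dot2 (deriv γ t) (deriv γ t) = 1)
    (hζ : IsTangentArc (chordCoord γ t) (L / 2) C c h₀) {h : ℝ} (hh₀ : h ≠ 0) (hh : |h| < h₀)
    (s : ℝ) : γ t + h • nor γ t ≠ γ s := by
  obtain ⟨u, hu, hsu⟩ := exists_abs_le_apply_eq_of_periodic hper hL t s
  rw [hsu, ← sub_ne_zero, ← map_ne_zero_iff _ (frameCoord_injective ht),
    frameCoord_add_smul_nor_sub ht]
  exact hζ.add_ne_zero hh hu fun hzero => hh₀ (by simpa using congrArg re hzero)

lemma exists_abs_K22free_mul_le (hL : 0 < L) (hper : Function.Periodic γ L)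
    (ht : dot2 (deriv γ t) (deriv γ t) = 1)
    (hζ : IsTangentArc (chordCoord γ t) (L / 2) C c h₀) (ν : ℝ) (hσ : Continuous σ)
    (hσper : Function.Periodic σ L) : ∃ M, ∀ s, |K22free γ ν t (γ t) (γ s) * σ s| ≤ M := by
  obtain ⟨K, hG⟩ := exists_isDipoleSymbol_plateSymbol ν
  obtain ⟨D, hD⟩ := hσper.isBounded_of_continuous hL.ne' hσ |>.exists_norm_le
  have hkernel : ∀ s, |K22free γ ν t (γ t) (γ s)| ≤
      |(1 - ν) * curv γ t| * (1 / (4 * π) + 1 / (2 * π)) + K * (C / c) := fun s => by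
    obtain ⟨u, hu, hsu⟩ := exists_abs_le_apply_eq_of_periodic hper hL t s
    rw [hsu, K22free_eq_plateKernel ht]
    exact hζ.abs_kernel_le hG (abs_plateKernel_sub_le ν (curv γ t)) hu
  refine ⟨_, fun s => (abs_mul _ _).trans_le (mul_le_mul (hkernel s) (hD (σ s) ⟨s, rfl⟩)
    (abs_nonneg _) ((abs_nonneg _).trans (hkernel s)))⟩

lemma integral_K22free_mul_eq (hper : Function.Periodic γ L)
    (ht : dot2 (deriv γ t) (deriv γ t) = 1) (ν : ℝ) (hσper : Function.Periodic σ L) (h : ℝ) :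
    ∫ s in (0 : ℝ)..L, K22free γ ν t (γ t + h • nor γ t) (γ s) * σ s =
      ∫ u in (-(L / 2))..(L / 2),
        plateKernel ν (curv γ t) (h + chordCoord γ t u) * σ (t + u) := by
  have hf : Function.Periodic (fun s => K22free γ ν t (γ t + h • nor γ t) (γ s) * σ s) L :=
    fun s => by simp only [hper s, hσper s]
  rw [integral_eq_integral_centered_of_periodic hf t]
  simp only [K22free_eq_plateKernel ht, frameCoord_add_smul_nor_sub ht]

end JumpRelation

theorem stmt19_general (L : ℝ) (hL : 0 < L) (γ : ℝ → ℝ × ℝ) (hγ : ContDiff ℝ 2 γ)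
    (hper : Function.Periodic γ L) (hinj : Set.InjOn γ (Set.Ico 0 L)) (t : ℝ)
    (ht : dot2 (deriv γ t) (deriv γ t) = 1) (ν : ℝ) (σ : ℝ → ℝ) (hσ : Continuous σ)
    (hσper : Function.Periodic σ L) :
    ∃ h₀ > (0 : ℝ),
      (∀ h : ℝ, 0 < |h| → |h| < h₀ → ∀ s : ℝ, γ t + h • nor γ t ≠ γ s) ∧
      (∃ M : ℝ, ∀ s ∈ Set.Icc (0 : ℝ) L, |K22free γ ν t (γ t) (γ s) * σ s| ≤ M) ∧
      Tendsto
        (fun h : ℝ =>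
          ∫ s in (0 : ℝ)..L, K22free γ ν t (γ t + h • nor γ t) (γ s) * σ s)
        (𝓝[>] (0 : ℝ))
        (𝓝 (1 / 2 * σ t + ∫ s in (0 : ℝ)..L, K22free γ ν t (γ t) (γ s) * σ s)) ∧
      Tendsto
        (fun h : ℝ =>
          ∫ s in (0 : ℝ)..L, K22free γ ν t (γ t + h • nor γ t) (γ s) * σ s)
        (𝓝[<] (0 : ℝ))
        (𝓝 (-(1 / 2) * σ t + ∫ s in (0 : ℝ)..L, K22free γ ν t (γ t) (γ s) * σ s)) := by
  obtain ⟨C, c, h₀, hζ⟩ := exists_isTangentArc_chordCoord hL hγ hper hinj ht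
  obtain ⟨K, hG⟩ := exists_isDipoleSymbol_plateSymbol ν
  have hk := continuousOn_plateKernel ν (curv γ t)
  have hkG := abs_plateKernel_sub_le ν (curv γ t)
  have hS : Continuous fun u => σ (t + u) := hσ.comp (continuous_const_add t)
  have hright := hζ.tendsto_integral_kernel_right hG hk hkG hS
  have hleft := hζ.tendsto_integral_kernel_left hG hk hkG hS
  have hdirect := integral_K22free_mul_eq hper ht ν hσper 0
  simp only [zero_smul, add_zero, Complex.ofReal_zero, zero_add] at hdirect
  simp only [integral_plateSymbol, add_zero, ← neg_mul, ← hdirect,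
    ← integral_K22free_mul_eq hper ht ν hσper] at hright hleft
  obtain ⟨M, hM⟩ := exists_abs_K22free_mul_le hL hper ht hζ ν hσ hσper
  exact ⟨h₀, hζ.offset_pos,
    fun h hpos hlt => add_smul_nor_ne_of_isTangentArc hL hper ht hζ (abs_pos.1 hpos) hlt,
    ⟨M, fun s _ => hM s⟩, hright, hleft⟩

theorem stmt19 (L : ℝ) (hL : 0 < L) (γ : ℝ → ℝ × ℝ)
    (hγ : ContDiff ℝ (⊤ : ℕ∞) γ)
    (hper : ∀ s, γ (s + L) = γ s)
    (hinj : Set.InjOn γ (Set.Ico 0 L))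
    (harc : ∀ s, dot2 (deriv γ s) (deriv γ s) = 1)
    (ν : ℝ)
    (σ : ℝ → ℝ) (hσ : ContDiff ℝ (⊤ : ℕ∞) σ) (hσper : ∀ s, σ (s + L) = σ s)
    (t : ℝ) :
    ∃ h₀ > (0 : ℝ),
      (∀ h : ℝ, 0 < |h| → |h| < h₀ → ∀ s : ℝ, γ t + h • nor γ t ≠ γ s) ∧
      (∃ M : ℝ, ∀ s ∈ Set.Icc (0 : ℝ) L, |K22free γ ν t (γ t) (γ s) * σ s| ≤ M) ∧
      Tendsto
        (fun h : ℝ =>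
          ∫ s in (0 : ℝ)..L, K22free γ ν t (γ t + h • nor γ t) (γ s) * σ s)
        (𝓝[>] (0 : ℝ))
        (𝓝 (1 / 2 * σ t + ∫ s in (0 : ℝ)..L, K22free γ ν t (γ t) (γ s) * σ s)) ∧
      Tendsto
        (fun h : ℝ =>
          ∫ s in (0 : ℝ)..L, K22free γ ν t (γ t + h • nor γ t) (γ s) * σ s)
        (𝓝[<] (0 : ℝ))
        (𝓝 (-(1 / 2) * σ t + ∫ s in (0 : ℝ)..L, K22free γ ν t (γ t) (γ s) * σ s)) := by
  exact stmt19_general L hL γ (hγ.of_le (WithTop.coe_le_coe.2 le_top)) hper hinj t (harc t) ν σ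
    hσ.continuous hσper
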